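/- Let E⁻ be a finite-dimensional normed space, E a Banach space, and F : E⁻ → E⁻ a continuous injective map satisfying c‖ζ₁ − ζ₂‖ ≤ ‖F(ζ₁) − F(ζ₂)‖ for some c > 0 and all ζ₁, ζ₂ ∈ E⁻. Then F is a homeomorphism of E⁻ onto E⁻ (i.e. F is surjective with continuous inverse). -/

import Mathlib

/-!
The image of `f` is closed because a lower Lipschitz bound pulls Cauchy filters back to Cauchy
filters, and it is open by invariance of domain, so it is everything by connectedness.

Invariance of domain is deduced from Brouwer's fixed point theorem following Tao. If `f` is
injective on a closed ball with centre `a`, a continuous extension `G` of the inverse of `f`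
satisfies `G (f a) = a`. If there were points `c` outside the image arbitrarily close to `f a`,
one could push the image radially away from `c` and perturb `G` slightly, so that the value `a` is
no longer taken. The composite of `f`, the push and the perturbed `G` would then be close to the
identity on the ball and miss its centre, against Brouwer's theorem.

Brouwer's theorem comes from the Milnor–Rogers argument: if a `C¹` map `φ` is the identity on the
boundary of a convex body `s`, then for small `t` the map `x ↦ x + t • (φ x - x)` is a bijection of
`s`, so the integral over `s` of its Jacobian determinant is the volume of `s`. This integral is a
polynomial in `t`, hence it is still the volume at `t = 1`, and `φ` cannot squash `s` onto its
boundary.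
-/

section Development

open MeasureTheory Set Metric Filter Topology Module Polynomial
open scoped NNReal

theorem integral_eval_eq_of_infinite {α : Type*} [MeasurableSpace α] {μ : Measure α}
    {p : α → ℝ[X]} {n : ℕ} (hdeg : ∀ x, (p x).natDegree ≤ n) {T : Set ℝ} (hT : T.Infinite) {C : ℝ}
    (hint : ∀ t ∈ T, Integrable (fun x ↦ (p x).eval t) μ)
    (hC : ∀ t ∈ T, ∫ x, (p x).eval t ∂μ = C) (t : ℝ) :
    ∫ x, (p x).eval t ∂μ = C := by
  obtain ⟨s, hsT, hcard⟩ := hT.exists_subset_card_eq (n + 1)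
  let w : ℝ → ℝ := fun i ↦ (Lagrange.basis s id i).eval t
  have interpolation (q : ℝ[X]) (hq : q.natDegree ≤ n) : q.eval t = ∑ i ∈ s, q.eval i * w i := by
    have hlt : q.degree < s.card := by
      rw [hcard]
      exact degree_le_natDegree.trans_lt (mod_cast Nat.lt_succ_of_le hq)
    conv_lhs => rw [Lagrange.eq_interpolate (injOn_id _) hlt, Lagrange.interpolate_apply]
    simp only [eval_finsetSum, eval_mul, eval_C, id_eq, w]
  have sum_weights : ∑ i ∈ s, w i = 1 := by
    simpa using (interpolation 1 (by simp)).symm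
  calc ∫ x, (p x).eval t ∂μ
      = ∫ x, ∑ i ∈ s, (p x).eval i * w i ∂μ := by simp only [interpolation _ (hdeg _)]
    _ = ∑ i ∈ s, (∫ x, (p x).eval i ∂μ) * w i := by
        rw [integral_finsetSum _ fun i hi ↦ (hint i (hsT hi)).mul_const _]
        simp only [integral_mul_const]
    _ = ∑ i ∈ s, C * w i := Finset.sum_congr rfl fun i hi ↦ by rw [hC i (hsT hi)]
    _ = C := by rw [← Finset.mul_sum, sum_weights, mul_one]

theorem exists_polynomial_eval_eq_det_one_add_smul {R M : Type*} [CommRing R] [Nontrivial R]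
    [AddCommGroup M] [Module R M] [Module.Free R M] [Module.Finite R M] (A : M →ₗ[R] M) :
    ∃ p : R[X], p.natDegree ≤ finrank R M ∧ ∀ t, p.eval t = LinearMap.det (1 + t • A) := by
  let b := finBasis R M
  let N := LinearMap.toMatrix b b A
  refine ⟨((X : R[X]) • N.map C + (1 : Matrix _ _ R).map C).det, ?_, fun t ↦ ?_⟩
  · simpa using natDegree_det_X_add_C_le N 1
  · rw [← coe_evalRingHom, RingHom.map_det, ← LinearMap.det_toMatrix b]
    congr 1
    ext i j
    by_cases hij : i = j <;> simp [N, hij, add_comm, mul_comm t, LinearMap.toMatrix_one]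

section Normed

variable {E : Type*} [NormedAddCommGroup E] [NormedSpace ℝ E]

theorem bijective_add_of_lipschitzWith [CompleteSpace E] {u : E → E} {K : ℝ≥0}
    (hu : LipschitzWith K u) (hK : K < 1) : Function.Bijective fun x ↦ x + u x := by
  have happrox : ApproximatesLinearOn (fun x ↦ x + u x)
      (ContinuousLinearEquiv.refl ℝ E : E →L[ℝ] E) univ K := by
    intro x _ y _
    simpa [add_sub_add_comm] using hu.norm_sub_le x y
  have hconst : Subsingleton E ∨
      K < ‖((ContinuousLinearEquiv.refl ℝ E).symm : E →L[ℝ] E)‖₊⁻¹ := by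
    rcases subsingleton_or_nontrivial E with hE | hE
    · exact .inl hE
    · exact .inr (by simpa using hK)
  exact ⟨injOn_univ.1 (happrox.injOn hconst), happrox.surjective hconst⟩

theorem eventually_forall_det_id_add_smul_pos {X : Type*} [TopologicalSpace X] {A : X → E →L[ℝ] E}
    {s : Set X} (hs : IsCompact s) (hA : Continuous A) :
    ∀ᶠ t in 𝓝 (0 : ℝ), ∀ x ∈ s, 0 < (ContinuousLinearMap.id ℝ E + t • A x).det := by
  refine hs.eventually_forall_of_forall_eventually fun x _ ↦ ?_
  have hcont : Continuous fun z : ℝ × X ↦ (ContinuousLinearMap.id ℝ E + z.1 • A z.2).det :=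
    ContinuousLinearMap.continuous_det.comp (by fun_prop)
  refine hcont.continuousAt.eventually (lt_mem_nhds ?_)
  simp [ContinuousLinearMap.det]

variable [FiniteDimensional ℝ E]

theorem lipschitzWith_indicator_of_eqOn_frontier {F : Type*} [NormedAddCommGroup F] {u : E → F}
    {s : Set E} {K : ℝ≥0} (hs : IsClosed s) (hu : LipschitzOnWith K u s)
    (hzero : EqOn u 0 (frontier s)) : LipschitzWith K (s.indicator u) := by
  have across {x y : E} (hx : x ∈ s) (hy : y ∉ s) : ‖u x‖ ≤ K * dist x y := by
    obtain ⟨z, hz, hxz⟩ := exists_mem_frontier_infDist_compl_eq_dist hx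
      (ne_univ_iff_exists_notMem s |>.2 ⟨y, hy⟩)
    calc ‖u x‖ = dist (u x) (u z) := by rw [hzero hz, Pi.zero_apply, dist_zero_right]
      _ ≤ K * dist x z := hu.dist_le_mul x hx z (hs.frontier_subset hz)
      _ ≤ K * dist x y := by
        rw [← hxz]
        gcongr
        exact infDist_le_dist_of_mem hy
  refine LipschitzWith.of_dist_le_mul fun x y ↦ ?_
  by_cases hx : x ∈ s <;> by_cases hy : y ∈ s
  · simpa [hx, hy] using hu.dist_le_mul x hx y hy
  · simpa [hx, hy] using across hx hy
  · simpa [hx, hy, dist_comm x y] using across hy hx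
  · simp only [hx, hy, not_false_eq_true, indicator_of_notMem, dist_self]
    positivity

theorem eventually_bijOn_add_smul {u : E → E} {s : Set E} {K : ℝ≥0} (hs : IsClosed s)
    (hu : LipschitzOnWith K u s) (hzero : EqOn u 0 (frontier s)) :
    ∀ᶠ t in 𝓝 (0 : ℝ), BijOn (fun x ↦ x + t • u x) s s := by
  have hsmall : ∀ᶠ t in 𝓝 (0 : ℝ), ‖t‖₊ * K < 1 :=
    (by fun_prop : Continuous fun t : ℝ ↦ ‖t‖₊ * K).tendsto' 0 0 (by simp) |>.eventually_lt_const
      one_pos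
  filter_upwards [hsmall] with t ht
  have hbij : Function.Bijective fun x ↦ x + t • s.indicator u x :=
    bijective_add_of_lipschitzWith
      ((lipschitzWith_smul t).comp (lipschitzWith_indicator_of_eqOn_frontier hs hu hzero)) ht
  have hcompl : BijOn (fun x ↦ x + t • s.indicator u x) sᶜ sᶜ :=
    (bijOn_id sᶜ).congr fun x hx ↦ by simp [indicator_of_notMem hx]
  simpa only [compl_compl] using
    (hcompl.compl hbij).congr fun x hx ↦ by simp [indicator_of_mem (compl_compl s ▸ hx)]

theorem setIntegral_det_eq_of_bijOn [MeasurableSpace E] [BorelSpace E] (μ : Measure E)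
    [μ.IsAddHaarMeasure] {φ : E → E} {φ' : E → E →L[ℝ] E} {s t : Set E} (hs : MeasurableSet s)
    (hφ : ∀ x ∈ s, HasFDerivWithinAt φ (φ' x) s x) (hbij : BijOn φ s t)
    (hpos : ∀ x ∈ s, 0 ≤ (φ' x).det) : ∫ x in s, (φ' x).det ∂μ = μ.real t := by
  have hchange := integral_image_eq_integral_abs_det_fderiv_smul μ hs hφ hbij.injOn fun _ ↦ (1 : ℝ)
  rw [hbij.image_eq] at hchange
  calc ∫ x in s, (φ' x).det ∂μ = ∫ x in s, |(φ' x).det| • (1 : ℝ) ∂μ :=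
        setIntegral_congr_fun hs fun x hx ↦ by simp [abs_of_nonneg (hpos x hx)]
    _ = μ.real t := by rw [← hchange]; simp

theorem setIntegral_det_fderiv_eq_of_eqOn_frontier [MeasurableSpace E] [BorelSpace E]
    (μ : Measure E) [μ.IsAddHaarMeasure] {φ : E → E} {s : Set E} (hs : IsCompact s)
    (hconv : Convex ℝ s) (hφ : ContDiff ℝ 1 φ) (hid : EqOn φ id (frontier s)) :
    ∫ x in s, (fderiv ℝ φ x).det ∂μ = μ.real s := by
  let A : E → E →L[ℝ] E := fun x ↦ fderiv ℝ φ x - ContinuousLinearMap.id ℝ E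
  have hA : Continuous A := (hφ.continuous_fderiv one_ne_zero).sub continuous_const
  have hderiv (t : ℝ) (x : E) : HasFDerivAt (fun x ↦ x + t • (φ x - x))
      (ContinuousLinearMap.id ℝ E + t • A x) x :=
    (hasFDerivAt_id x).add
      (((hφ.differentiable one_ne_zero x).hasFDerivAt.sub (hasFDerivAt_id x)).const_smul t)
  obtain ⟨K, hK⟩ := (hφ.sub contDiff_id).contDiffOn.exists_lipschitzOnWith one_ne_zero hconv hs
  have hsmall : ∀ᶠ t in 𝓝 (0 : ℝ),
      ∫ x in s, (ContinuousLinearMap.id ℝ E + t • A x).det ∂μ = μ.real s := by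
    filter_upwards [eventually_bijOn_add_smul hs.isClosed hK fun x hx ↦ sub_eq_zero.2 (hid hx),
      eventually_forall_det_id_add_smul_pos hs hA] with t hbij hpos
    exact setIntegral_det_eq_of_bijOn μ hs.measurableSet
      (fun x _ ↦ (hderiv t x).hasFDerivWithinAt) hbij fun x hx ↦ (hpos x hx).le
  choose p hdeg hp using fun x ↦ exists_polynomial_eval_eq_det_one_add_smul (A x : E →ₗ[ℝ] E)
  replace hp (t : ℝ) (x : E) : (p x).eval t = (ContinuousLinearMap.id ℝ E + t • A x).det := hp x t
  have hcont (t : ℝ) : Continuous fun x ↦ (ContinuousLinearMap.id ℝ E + t • A x).det :=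
    ContinuousLinearMap.continuous_det.comp (by fun_prop)
  have hone := integral_eval_eq_of_infinite hdeg (infinite_of_mem_nhds 0 hsmall) (μ := μ.restrict s)
    (fun t _ ↦ by
      simpa only [hp, IntegrableOn] using (hcont t).continuousOn.integrableOn_compact (μ := μ) hs)
    (fun t ht ↦ by simpa only [hp, mem_ofPred_eq] using ht) 1
  simpa only [hp, one_smul, A, add_sub_cancel] using hone

theorem nonempty_interior_image_of_eqOn_frontier {φ : E → E} {s : Set E} (hs : IsCompact s)
    (hconv : Convex ℝ s) (hne : (interior s).Nonempty) (hφ : ContDiff ℝ 1 φ)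
    (hid : EqOn φ id (frontier s)) : (interior (φ '' s)).Nonempty := by
  borelize E
  let μ : Measure E := Measure.addHaar
  obtain ⟨x, hx, hdet⟩ : ∃ x ∈ interior s, (fderiv ℝ φ x).det ≠ 0 := by
    by_contra! hzero
    have hvolume : μ.real s = 0 := by
      rw [← setIntegral_det_fderiv_eq_of_eqOn_frontier μ hs hconv hφ hid,
        ← setIntegral_congr_set (interior_ae_eq_of_null_frontier (hconv.addHaar_frontier μ)),
        setIntegral_eq_zero_of_forall_eq_zero hzero]
    exact (ENNReal.toReal_pos (Measure.measure_pos_of_nonempty_interior μ hne).ne'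
      hs.measure_lt_top.ne).ne' hvolume
  have hopen : map φ (𝓝 x) = 𝓝 (φ x) :=
    (hφ.contDiffAt.hasStrictFDerivAt one_ne_zero).map_nhds_eq_of_surj
      (LinearMap.range_eq_top.2 (LinearMap.equivOfDetNeZero _ hdet).surjective)
  exact ⟨φ x, mem_interior_iff_mem_nhds.2
    (hopen ▸ image_mem_map (mem_interior_iff_mem_nhds.1 hx))⟩

end Normed

section Inner

variable {E : Type*} [NormedAddCommGroup E] [InnerProductSpace ℝ E] [FiniteDimensional ℝ E]

theorem exists_isFixedPt_of_contDiff_of_bounded {g : E → E} (hg : ContDiff ℝ 1 g) {M : ℝ}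
    (hM : ∀ x, ‖g x‖ ≤ M) : ∃ x, Function.IsFixedPt g x := by
  by_contra! hfix
  have hM₀ : 0 ≤ M := (norm_nonneg _).trans (hM 0)
  let χ : ContDiffBump (0 : E) := ⟨M + 1, M + 2, by positivity, by linarith⟩
  let h : E → E := fun x ↦ x - χ x • g x
  have hsmooth : ContDiff ℝ 1 h := contDiff_id.sub (χ.contDiff.smul hg)
  have h_ne_zero (x : E) : h x ≠ 0 := by
    intro hx
    have hx : x = χ x • g x := sub_eq_zero.1 hx
    have hball : x ∈ closedBall 0 (M + 1) := by
      rw [mem_closedBall_zero_iff, hx, norm_smul, Real.norm_of_nonneg χ.nonneg]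
      nlinarith [hM x, norm_nonneg (g x), χ.le_one (x := x)]
    exact hfix x (by simpa [χ.one_of_mem_closedBall hball, Function.IsFixedPt] using hx.symm)
  have norm_h_pos (x : E) : 0 < ‖h x‖ := norm_pos_iff.2 (h_ne_zero x)
  have hR : 0 < M + 2 := by positivity
  let r : E → E := fun x ↦ ((M + 2) / ‖h x‖) • h x
  have hr : ContDiff ℝ 1 r :=
    (contDiff_const.div (hsmooth.norm ℝ h_ne_zero) fun x ↦ (norm_h_pos x).ne').smul hsmooth
  have hr_id : EqOn r id (frontier (closedBall 0 (M + 2))) := by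
    intro x hx
    rw [frontier_closedBall _ hR.ne', mem_sphere_zero_iff_norm] at hx
    have hχ : χ x = 0 := χ.zero_of_le_dist (by simp [hx, χ])
    simp [r, h, hχ, hx, hR.ne']
  have hr_sphere : range r ⊆ sphere 0 (M + 2) := by
    rintro _ ⟨x, rfl⟩
    rw [mem_sphere_zero_iff_norm, norm_smul, norm_div, norm_norm, Real.norm_of_nonneg hR.le,
      div_mul_cancel₀ _ (norm_h_pos x).ne']
  obtain ⟨y, hy⟩ := nonempty_interior_image_of_eqOn_frontier (isCompact_closedBall 0 (M + 2))
    (convex_closedBall 0 (M + 2)) ⟨0, by simp [interior_closedBall _ hR.ne', hR]⟩ hr hr_id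
  have := interior_mono ((image_subset_range _ _).trans hr_sphere) hy
  rwa [interior_sphere _ hR.ne'] at this

theorem exists_isFixedPt_of_continuous_of_bounded {f : E → E} (hf : Continuous f) {M : ℝ}
    (hM : ∀ x, ‖f x‖ ≤ M) : ∃ x, Function.IsFixedPt f x := by
  by_contra! hfix
  obtain ⟨g, hg, hgf, -⟩ := hf.exists_contDiff_approx 1 (ε := fun x ↦ min 1 (dist x (f x)))
    (by fun_prop) fun x ↦ lt_min one_pos (dist_pos.2 (Ne.symm (hfix x)))
  have hgM (x : E) : ‖g x‖ ≤ M + 1 := by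
    have hclose : ‖g x - f x‖ < 1 := dist_eq_norm (g x) (f x) ▸ (hgf x).trans_le (min_le_left _ _)
    linarith [norm_le_norm_sub_add (g x) (f x), hM x]
  obtain ⟨x, hx⟩ := exists_isFixedPt_of_contDiff_of_bounded hg hgM
  exact ((hgf x).trans_le (min_le_right _ _)).ne (by rw [hx])

theorem brouwer_closedBall {f : E → E} {a : E} {r : ℝ} (hr : 0 < r)
    (hf : ContinuousOn f (closedBall a r)) (hmaps : MapsTo f (closedBall a r) (closedBall a r)) :
    ∃ x ∈ closedBall a r, Function.IsFixedPt f x := by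
  have := Metric.instTietzeExtensionClosedBall ℝ a hr
  obtain ⟨g, hg⟩ := ContinuousMap.exists_restrict_eq isClosed_closedBall
    ⟨hmaps.restrict, hf.mapsToRestrict hmaps⟩
  have hgf (x : E) (hx : x ∈ closedBall a r) : (g x : E) = f x :=
    congrArg Subtype.val (DFunLike.congr_fun hg ⟨x, hx⟩)
  obtain ⟨x, hx⟩ := exists_isFixedPt_of_continuous_of_bounded (f := fun x ↦ (g x : E))
    (by fun_prop) fun x ↦ norm_le_of_mem_closedBall (g x).2
  have hmem : x ∈ closedBall a r := hx ▸ (g x).2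
  exact ⟨x, hmem, (hgf x hmem).symm.trans hx⟩

theorem exists_eq_center_of_dist_self_le {q : E → E} {a : E} {r : ℝ} (hr : 0 < r)
    (hq : ContinuousOn q (closedBall a r)) (hdist : ∀ x ∈ closedBall a r, dist (q x) x ≤ r) :
    ∃ x ∈ closedBall a r, q x = a := by
  obtain ⟨x, hx, hfix⟩ := brouwer_closedBall (f := fun x ↦ a + (x - q x)) hr (by fun_prop)
    fun x hx ↦ by simpa [dist_eq_norm, norm_sub_rev] using hdist x hx
  refine ⟨x, hx, ?_⟩
  have hfix : a + (x - q x) = x := hfix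
  rw [add_sub_left_comm, add_eq_left, sub_eq_zero] at hfix
  exact hfix.symm

end Inner

section Perturbation

variable {E : Type*} [NormedAddCommGroup E] [NormedSpace ℝ E]

/-- The radial push away from `c`: each point of the closed ball of radius `ε` around `c` moves
along its ray onto the sphere, and the points outside stay fixed. At the centre, where there is no
ray, the division by zero leaves `c` fixed. -/
noncomputable def radialPush (c : E) (ε : ℝ) (y : E) : E :=
  c + max (ε / ‖y - c‖) 1 • (y - c)

theorem continuousOn_radialPush (c : E) (ε : ℝ) : ContinuousOn (radialPush c ε) {c}ᶜ := by
  have hne (y : E) (hy : y ∈ ({c}ᶜ : Set E)) : ‖y - c‖ ≠ 0 := norm_ne_zero_iff.2 (sub_ne_zero.2 hy)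
  have hdiv : ContinuousOn (fun y ↦ ε / ‖y - c‖) {c}ᶜ := continuousOn_const.div (by fun_prop) hne
  exact continuousOn_const.add ((hdiv.sup continuousOn_const).smul (by fun_prop))

theorem radialPush_of_le_dist {c y : E} {ε : ℝ} (hy : ε ≤ dist y c) : radialPush c ε y = y := by
  rw [dist_eq_norm] at hy
  rw [radialPush, max_eq_right (div_le_one_of_le₀ hy (norm_nonneg _)), one_smul,
    add_sub_cancel]

theorem radialPush_mem_sphere {c y : E} {ε : ℝ} (hne : y ≠ c) (hy : dist y c ≤ ε) :
    radialPush c ε y ∈ sphere c ε := by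
  have hpos : 0 < ‖y - c‖ := norm_pos_iff.2 (sub_ne_zero.2 hne)
  rw [dist_eq_norm] at hy
  rw [radialPush, max_eq_left ((one_le_div hpos).2 hy), mem_sphere_iff_norm, add_sub_cancel_left,
    norm_smul, norm_div, norm_norm, div_mul_cancel₀ _ hpos.ne',
    Real.norm_of_nonneg (hpos.le.trans hy)]

theorem radialPush_mem_diff_ball_union_sphere {c y : E} {ε : ℝ} {S : Set E} (hne : y ≠ c)
    (hy : y ∈ S) : radialPush c ε y ∈ S \ ball c ε ∪ sphere c ε := by
  rcases le_total ε (dist y c) with hfar | hnear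
  · rw [radialPush_of_le_dist hfar]
    exact .inl ⟨hy, fun h ↦ hfar.not_gt h⟩
  · exact .inr (radialPush_mem_sphere hne hnear)

theorem dist_comp_radialPush_lt {X : Type*} [PseudoMetricSpace X] {P G : E → X} {b : X} {c y : E}
    {ε η : ℝ} (hPG : ∀ z, dist (P z) (G z) < η) (hG : ∀ z ∈ closedBall c ε, dist (G z) b < η)
    (hne : y ≠ c) : dist (P (radialPush c ε y)) (G y) < 3 * η := by
  have hη : 0 < η := dist_nonneg.trans_lt (hPG y)
  rcases le_total ε (dist y c) with hfar | hnear
  · rw [radialPush_of_le_dist hfar]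
    linarith [hPG y]
  · let z := radialPush c ε y
    have hz : z ∈ closedBall c ε := sphere_subset_closedBall (radialPush_mem_sphere hne hnear)
    linarith [hPG z, hG z hz, hG y hnear, dist_triangle4_right (P z) (G y) (G z) b]

variable [FiniteDimensional ℝ E]

theorem exists_continuous_dist_lt_forall_ne [MeasurableSpace E] [BorelSpace E] (μ : Measure E)
    [μ.IsAddHaarMeasure] {G : E → E} (hG : Continuous G) {a : E} {K N : Set E} (hK : IsCompact K)
    (hGK : ∀ y ∈ K, G y ≠ a) (hN : μ N = 0) {η : ℝ} (hη : 0 < η) :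
    ∃ P : E → E, Continuous P ∧ (∀ y, dist (P y) (G y) < η) ∧ ∀ y ∈ K ∪ N, P y ≠ a := by
  obtain ⟨δ, hδ, hδK⟩ := hK.exists_forall_le' (f := fun y ↦ dist (G y) a) (by fun_prop)
    fun y hy ↦ dist_pos.2 (hGK y hy)
  let m := min η δ
  have hm : 0 < m := lt_min hη hδ
  obtain ⟨Q, hQ, hQG, -⟩ := hG.exists_contDiff_approx 1 (ε := fun _ ↦ m / 2) (by fun_prop)
    fun _ ↦ half_pos hm
  have hnull : μ (Q '' N) = 0 :=
    addHaar_image_eq_zero_of_differentiableOn_of_addHaar_eq_zero μ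
      (hQ.differentiable one_ne_zero).differentiableOn hN
  -- A translation of `Q` by less than `m / 2` moves the null set `Q '' N` off `a`.
  obtain ⟨b, hbN, hb⟩ := (interior_eq_empty_iff_dense_compl.1
    (Measure.interior_eq_empty_of_null hnull)).exists_dist_lt a (half_pos hm)
  have hPG (y : E) : dist (Q y + (a - b)) (G y) < m := by
    calc dist (Q y + (a - b)) (G y) ≤ dist (Q y + (a - b)) (Q y) + dist (Q y) (G y) :=
          dist_triangle _ _ _
      _ < m / 2 + m / 2 := add_lt_add (by simpa [dist_eq_norm] using hb) (hQG y)
      _ = m := add_halves m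
  refine ⟨fun y ↦ Q y + (a - b), hQ.continuous.add continuous_const,
    fun y ↦ (hPG y).trans_le (min_le_left _ _), ?_⟩
  rintro y (hy | hy) (hya : Q y + (a - b) = a)
  · refine ((hPG y).trans_le ((min_le_right _ _).trans (hδK y hy))).ne ?_
    rw [hya, dist_comm]
  · refine hbN ⟨y, hy, ?_⟩
    rw [← add_sub_assoc, sub_eq_iff_eq_add, add_comm, add_left_cancel_iff] at hya
    exact hya

end Perturbation

theorem isClosedEmbedding_of_antilipschitzWith {X Y : Type*} [EMetricSpace X] [CompleteSpace X]
    [EMetricSpace Y] {f : X → Y} {K : ℝ≥0} (hf : Continuous f) (hK : AntilipschitzWith K f) :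
    IsClosedEmbedding f := by
  refine ⟨hK.isEmbedding hf, isClosed_of_closure_subset fun y hy ↦ ?_⟩
  have hne : (comap f (𝓝 y)).NeBot :=
    comap_neBot_iff_frequently.2 (mem_closure_iff_frequently.1 hy)
  have hcauchy : Cauchy (comap f (𝓝 y)) := cauchy_nhds.comap hK.comap_uniformity_le
  obtain ⟨x, hx⟩ := CompleteSpace.complete hcauchy
  exact ⟨x, tendsto_nhds_unique (hf.continuousAt.mono_left hx) tendsto_comap⟩

section InvarianceOfDomain

theorem exists_continuous_leftInvOn.{u, v} {X : Type u} {Y : Type v} [TopologicalSpace X]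
    [TopologicalSpace Y] [T2Space Y] [NormalSpace Y] [TietzeExtension.{v, u} X] {f : X → Y}
    {s : Set X} (hs : IsCompact s) (hf : ContinuousOn f s) (hinj : InjOn f s) :
    ∃ G : Y → X, Continuous G ∧ LeftInvOn G f s := by
  have := isCompact_iff_compactSpace.1 hs
  obtain ⟨G, hG⟩ := ContinuousMap.exists_extension
    ((continuousOn_iff_continuous_domRestrict.1 hf).isClosedEmbedding hinj.injective)
    ⟨((↑) : s → X), continuous_subtype_val⟩
  exact ⟨G, G.continuous, fun x hx ↦ DFunLike.congr_fun hG ⟨x, hx⟩⟩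

theorem image_closedBall_mem_nhds {E : Type*} [NormedAddCommGroup E] [InnerProductSpace ℝ E]
    [FiniteDimensional ℝ E] {f : E → E} {a : E} {r : ℝ} (hr : 0 < r)
    (hf : ContinuousOn f (closedBall a r)) (hinj : InjOn f (closedBall a r)) :
    f '' closedBall a r ∈ 𝓝 (f a) := by
  by_contra hnhds
  borelize E
  have ha : a ∈ closedBall a r := mem_closedBall_self hr.le
  have hcompact := isCompact_closedBall a r
  obtain ⟨G, hG, hGf⟩ := exists_continuous_leftInvOn hcompact hf hinj
  obtain ⟨δ, hδ, hGδ⟩ := Metric.continuousAt_iff.1 (hG.continuousAt (x := f a)) (r / 3)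
    (by positivity)
  rw [hGf ha] at hGδ
  let ε := δ / 2
  have hε : 0 < ε := half_pos hδ
  obtain ⟨c, hca, hc⟩ : ∃ c, dist c (f a) < ε ∧ c ∉ f '' closedBall a r := by
    by_contra! hball
    exact hnhds (mem_of_superset (ball_mem_nhds _ hε) hball)
  have hne (x : E) (hx : x ∈ closedBall a r) : f x ≠ c := fun h ↦ hc ⟨x, hx, h⟩
  have hGc (z : E) (hz : z ∈ closedBall c ε) : dist (G z) a < r / 3 :=
    hGδ ((dist_triangle z c (f a)).trans_lt
      ((add_lt_add_of_le_of_lt hz hca).trans_eq (add_halves δ)))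
  have hG_ne : ∀ y ∈ f '' closedBall a r \ ball c ε, G y ≠ a := by
    rintro _ ⟨⟨x, hx, rfl⟩, hxc⟩ hxa
    rw [hGf hx] at hxa
    exact hxc (by rwa [hxa, mem_ball'])
  obtain ⟨P, hP, hPG, hP_ne⟩ := exists_continuous_dist_lt_forall_ne Measure.addHaar hG
    ((hcompact.image_of_continuousOn hf).diff isOpen_ball) hG_ne
    (Measure.addHaar_sphere_of_ne_zero _ c hε.ne') (η := r / 3) (by positivity)
  have hdist (x : E) (hx : x ∈ closedBall a r) : dist (P (radialPush c ε (f x))) x ≤ r :=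
    calc dist (P (radialPush c ε (f x))) x = dist (P (radialPush c ε (f x))) (G (f x)) := by
          rw [hGf hx]
      _ ≤ 3 * (r / 3) := (dist_comp_radialPush_lt hPG hGc (hne x hx)).le
      _ = r := mul_div_cancel₀ r three_ne_zero
  obtain ⟨x, hx, hxa⟩ := exists_eq_center_of_dist_self_le hr
    (hP.comp_continuousOn ((continuousOn_radialPush c ε).comp hf hne)) hdist
  exact hP_ne _ (radialPush_mem_diff_ball_union_sphere (hne x hx) (mem_image_of_mem f hx)) hxa

theorem isOpen_image_of_injOn_of_innerProductSpace {E : Type*} [NormedAddCommGroup E]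
    [InnerProductSpace ℝ E] [FiniteDimensional ℝ E] {f : E → E} {U : Set E} (hU : IsOpen U)
    (hf : ContinuousOn f U) (hinj : InjOn f U) : IsOpen (f '' U) := by
  refine isOpen_iff_mem_nhds.2 ?_
  rintro _ ⟨a, ha, rfl⟩
  obtain ⟨r, hr, hrU⟩ := nhds_basis_closedBall.mem_iff.1 (hU.mem_nhds ha)
  exact mem_of_superset (image_closedBall_mem_nhds hr (hf.mono hrU) (hinj.mono hrU))
    (image_mono hrU)

variable {E F : Type*}
  [AddCommGroup E] [Module ℝ E] [TopologicalSpace E] [IsTopologicalAddGroup E]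
  [ContinuousSMul ℝ E] [T2Space E] [FiniteDimensional ℝ E]
  [AddCommGroup F] [Module ℝ F] [TopologicalSpace F] [IsTopologicalAddGroup F]
  [ContinuousSMul ℝ F] [T2Space F] [FiniteDimensional ℝ F]

theorem isOpen_image_of_injOn (hdim : finrank ℝ E = finrank ℝ F) {f : E → F} {U : Set E}
    (hU : IsOpen U) (hf : ContinuousOn f U) (hinj : InjOn f U) : IsOpen (f '' U) := by
  let e : E ≃L[ℝ] EuclideanSpace ℝ (Fin (finrank ℝ E)) := toEuclidean
  let e' : F ≃L[ℝ] EuclideanSpace ℝ (Fin (finrank ℝ E)) := .ofFinrankEq (by simp [hdim])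
  have hmaps : MapsTo e.symm (e '' U) U := by
    rintro _ ⟨x, hx, rfl⟩
    rwa [e.symm_apply_apply]
  have hopen : IsOpen ((e' ∘ f ∘ e.symm) '' (e '' U)) :=
    isOpen_image_of_injOn_of_innerProductSpace (e.toHomeomorph.isOpenMap U hU)
      (e'.continuous.comp_continuousOn (hf.comp e.symm.continuous.continuousOn hmaps))
      (e'.injective.injOn.comp (hinj.comp e.symm.injective.injOn hmaps) (mapsTo_univ _ _))
  have himage : (e' ∘ f ∘ e.symm) '' (e '' U) = e' '' (f '' U) := by
    simp only [image_image, Function.comp_apply, e.symm_apply_apply]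
  rw [himage] at hopen
  exact e'.toHomeomorph.isOpen_image.1 hopen

theorem stmt_14_general (hdim : finrank ℝ E = finrank ℝ F) {f : E → F}
    (hf : IsClosedEmbedding f) : IsHomeomorph f := by
  have hopen : IsOpenMap f := fun _ hU ↦
    isOpen_image_of_injOn hdim hU hf.continuous.continuousOn hf.injective.injOn
  have := RealTopologicalVectorSpace.contractibleSpace (E := F)
  have hrange : range f = univ :=
    IsClopen.eq_univ ⟨hf.isClosed_range, hopen.isOpen_range⟩ (range_nonempty f)
  exact ⟨hf.continuous, hopen, hf.injective, range_eq_univ.1 hrange⟩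

end InvarianceOfDomain

end Development

/-- topological core of the Graph Transform: a continuous injective
expanding-below map of a finite-dimensional normed space onto itself is a
homeomorphism. -/
theorem stmt_14 {F : Type*} [NormedAddCommGroup F] [NormedSpace ℝ F]
    [FiniteDimensional ℝ F]
    (f : F → F) (hcont : Continuous f) (hinj : Function.Injective f)
    (c : ℝ) (hc : 0 < c) (hlow : ∀ x y : F, c * ‖x - y‖ ≤ ‖f x - f y‖) :
    Function.Surjective f ∧
    ∃ g : F → F, Continuous g ∧ Function.LeftInverse g f ∧ Function.RightInverse g f := by
  have hanti : AntilipschitzWith (Real.toNNReal c⁻¹) f :=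
    .of_le_mul_dist fun x y ↦ by
      rw [Real.coe_toNNReal _ (by positivity), ← div_eq_inv_mul, le_div_iff₀ hc, mul_comm]
      simpa only [dist_eq_norm] using hlow x y
  have hhomeo := stmt_14_general rfl (isClosedEmbedding_of_antilipschitzWith hcont hanti)
  exact ⟨hhomeo.surjective, hhomeo.homeomorph.symm, hhomeo.homeomorph.symm.continuous,
    hhomeo.homeomorph.left_inv, hhomeo.homeomorph.right_inv⟩
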